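/- arXiv:1410.6222 — 2 statements merged into one kernel-verified Lean document; each statement's English description precedes it below -/
import Mathlib

section
/- Let X and Y be real normed spaces, D ⊆ X convex, F : X → Y a map, f : X → ℝ nonnegative, and p ∈ [1, ∞). Assume: f is coercive and weakly sequentially lower semicontinuous; F is weakly sequentially continuous on D; and every bounded sequence in D has a subsequence converging weakly to a point of D. Let y ∈ Y and let x† ∈ D be an f-minimizing solution of F(x) = y. Let δ_k > 0 with δ_k → 0, y_k ∈ Y with ‖y − y_k‖ ≤ δ_k, let D_k ⊆ D be sets each containing a point z_k such that f(z_k) → f(x†) and γ_k := ‖F(x†) − F(z_k)‖ → 0, and let α_k > 0 satisfy α_k → 0 and (δ_k + γ_k)^p / α_k → 0. If x_k minimizes x ↦ ‖F(x) − y_k‖^p + α_k f(x) over D_k for each k, then (x_k) has a subsequence (x_{k_l}) converging weakly to some x̃ ∈ D which is an f-minimizing solution of F(x) = y, and f(x_{k_l}) → f(x̃). -/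
open Filter Topology

/-- Weak convergence of a sequence in a normed space: convergence against every
continuous linear functional. -/
def WeakTendsto {E : Type*} [NormedAddCommGroup E] [NormedSpace ℝ E]
    (u : ℕ → E) (x : E) : Prop :=
  ∀ φ : E →L[ℝ] ℝ, Filter.Tendsto (fun n => φ (u n)) Filter.atTop (nhds (φ x))

/-!
Comparing the Tikhonov functional at `x_k` and at `z_k` bounds `f (x_k)` by a sequence tending to
`f x†`. Coercivity then gives a weakly convergent subsequence, with limit `x̃ ∈ D`. Lower
semicontinuity bounds `f` from below along it, so the same comparison, now with `α_k → 0`, forces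
`F (x_k) - y_k → 0` along the subsequence, whence `F x̃ = y`. Finally, `f x̃ ≤ f x†` by lower
semicontinuity, and the minimality of `x†` turns this into convergence of the values of `f`.
-/

section OrderLimits

variable {ι : Type*} {l : Filter ι}

lemma tendsto_zero_of_tendsto_rpow_zero {u : ι → ℝ} {p : ℝ} (hp : 0 < p) (hu : ∀ i, 0 ≤ u i)
    (h : Tendsto (fun i => u i ^ p) l (𝓝 0)) : Tendsto u l (𝓝 0) := by
  have hroot : Tendsto (fun i => (u i ^ p) ^ p⁻¹) l (𝓝 (0 ^ p⁻¹)) :=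
    h.rpow_const (Or.inr (inv_nonneg.2 hp.le))
  simpa only [Real.rpow_rpow_inv (hu _) hp.ne', Real.zero_rpow (inv_ne_zero hp.ne')] using hroot

lemma le_of_eventually_gt_of_le_tendsto {β : Type*} [LinearOrder β] [DenselyOrdered β]
    [TopologicalSpace β] [ClosedIciTopology β] [l.NeBot] {u b : ι → β} {L c : β}
    (hlower : ∀ a < L, ∀ᶠ i in l, a < u i) (hub : ∀ᶠ i in l, u i ≤ b i)
    (hb : Tendsto b l (𝓝 c)) : L ≤ c :=
  le_of_forall_lt_imp_le_of_dense fun a ha =>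
    ge_of_tendsto hb <| (hlower a ha).mp <| hub.mono fun _ hle hlt => hlt.le.trans hle

lemma tendsto_of_eventually_gt_of_le_tendsto {β : Type*} [Preorder β] [TopologicalSpace β]
    [OrderTopology β] {u b : ι → β} {L c : β}
    (hlower : ∀ a < L, ∀ᶠ i in l, a < u i) (hub : ∀ᶠ i in l, u i ≤ b i)
    (hb : Tendsto b l (𝓝 c)) (hcL : c ≤ L) : Tendsto u l (𝓝 L) :=
  tendsto_order.2 ⟨hlower, fun a ha =>
    hub.mp <| ((tendsto_order.1 hb).2 a (hcL.trans_lt ha)).mono fun _ hlt hle => hle.trans_lt hlt⟩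

end OrderLimits

section WeakConvergence

variable {X Y : Type*} [NormedAddCommGroup X] [NormedSpace ℝ X]
  [NormedAddCommGroup Y] [NormedSpace ℝ Y]

lemma WeakTendsto.of_tendsto {u : ℕ → X} {x : X} (h : Tendsto u atTop (𝓝 x)) :
    WeakTendsto u x :=
  fun φ => (φ.continuous.tendsto x).comp h

lemma WeakTendsto.unique {u : ℕ → X} {x x' : X} (hx : WeakTendsto u x)
    (hx' : WeakTendsto u x') : x = x' := by
  by_contra hne
  obtain ⟨φ, hφ⟩ := SeparatingDual.exists_separating_of_ne (R := ℝ) hne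
  exact hφ (tendsto_nhds_unique (hx φ) (hx' φ))

/-- Weak sequential continuity of a map on a set. -/
def WeakSeqContinuousOn (F : X → Y) (D : Set X) : Prop :=
  ∀ (u : ℕ → X) (x : X), (∀ k, u k ∈ D) → x ∈ D → WeakTendsto u x →
    WeakTendsto (fun k => F (u k)) (F x)

/-- Weak sequential lower semicontinuity on a set. It is phrased with strict lower bounds, as in
Mathlib's `LowerSemicontinuousOn`, because a real-valued `liminf` has a junk value along sequences
on which `f` is unbounded. -/
def WeakSeqLowerSemicontinuousOn (f : X → ℝ) (D : Set X) : Prop :=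
  ∀ (u : ℕ → X) (x : X), (∀ k, u k ∈ D) → x ∈ D → WeakTendsto u x →
    ∀ a < f x, ∀ᶠ k in atTop, a < f (u k)

lemma weakSeqLowerSemicontinuousOn_of_le_liminf {f : X → ℝ} {D : Set X}
    (hbdd : BddBelow (f '' D))
    (hf : ∀ (u : ℕ → X) (x : X), (∀ k, u k ∈ D) → x ∈ D → WeakTendsto u x →
      f x ≤ liminf (fun k => f (u k)) atTop) :
    WeakSeqLowerSemicontinuousOn f D := by
  intro u x hu hx hux a ha
  obtain ⟨m, hm⟩ := hbdd
  have hbelow : IsBoundedUnder (· ≥ ·) atTop fun k => f (u k) :=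
    isBoundedUnder_of ⟨m, fun k => hm ⟨u k, hu k, rfl⟩⟩
  exact eventually_lt_of_lt_liminf (ha.trans_le (hf u x hu hx hux)) hbelow

/-- The compactness required of the domain: bounded sequences in `D` have a subsequence converging
weakly to a point of `D`. -/
def BoundedlyWeakSeqCompact (D : Set X) : Prop :=
  ∀ u : ℕ → X, (∀ k, u k ∈ D) → Bornology.IsBounded (Set.range u) →
    ∃ (φ : ℕ → ℕ) (x : X), StrictMono φ ∧ x ∈ D ∧ WeakTendsto (fun l => u (φ l)) x

end WeakConvergence

section Tikhonov

/-- `x` is an `f`-minimizing solution in `D` of the equation `F x = y`. -/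
structure IsMinimizingSolution {X Y : Type*} (F : X → Y) (f : X → ℝ) (D : Set X) (y : Y)
    (x : X) : Prop where
  mem : x ∈ D
  map_eq : F x = y
  le_of_map_eq : ∀ v ∈ D, F v = y → f x ≤ f v

/-- The Tikhonov functional with data `y`, exponent `p`, penalty `f` and regularization
parameter `α`. -/
noncomputable def tikhonov {X Y : Type*} [SeminormedAddCommGroup Y] (F : X → Y) (f : X → ℝ)
    (p α : ℝ) (y : Y) (x : X) : ℝ :=
  ‖F x - y‖ ^ p + α * f x

section Comparison

variable {X Y ι : Type*} [SeminormedAddCommGroup Y] {F : X → Y} {f : X → ℝ} {p : ℝ}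

lemma residual_rpow_le_of_tikhonov_le {α : ℝ} (hα : 0 < α) {y : Y} {x z : X}
    (h : tikhonov F f p α y x ≤ tikhonov F f p α y z) :
    ‖F x - y‖ ^ p ≤ α * (‖F z - y‖ ^ p / α + f z - f x) := by
  have hcancel : α * (‖F z - y‖ ^ p / α) = ‖F z - y‖ ^ p := mul_div_cancel₀ _ hα.ne'
  unfold tikhonov at h
  linarith

lemma penalty_le_of_tikhonov_le {α : ℝ} (hα : 0 < α) {y : Y} {x z : X}
    (h : tikhonov F f p α y x ≤ tikhonov F f p α y z) :
    f x ≤ ‖F z - y‖ ^ p / α + f z :=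
  sub_nonneg.1 <| nonneg_of_mul_nonneg_right
    ((Real.rpow_nonneg (norm_nonneg _) p).trans (residual_rpow_le_of_tikhonov_le hα h)) hα

lemma tendsto_residual_of_tikhonov_le {l : Filter ι} {α : ι → ℝ} {y : ι → Y} {x z : ι → X}
    {c m : ℝ} (hp : 0 < p) (hα : ∀ i, 0 < α i) (hα0 : Tendsto α l (𝓝 0))
    (hmisfit : Tendsto (fun i => ‖F (z i) - y i‖ ^ p / α i) l (𝓝 0))
    (hfz : Tendsto (fun i => f (z i)) l (𝓝 c)) (hfx : ∀ᶠ i in l, m ≤ f (x i))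
    (h : ∀ i, tikhonov F f p (α i) (y i) (x i) ≤ tikhonov F f p (α i) (y i) (z i)) :
    Tendsto (fun i => F (x i) - y i) l (𝓝 0) := by
  have hbound : Tendsto (fun i => α i * (‖F (z i) - y i‖ ^ p / α i + f (z i) - m)) l (𝓝 0) := by
    simpa only [zero_mul] using hα0.mul ((hmisfit.add hfz).sub_const m)
  have hrpow : Tendsto (fun i => ‖F (x i) - y i‖ ^ p) l (𝓝 0) := by
    refine squeeze_zero' (.of_forall fun i => by positivity) ?_ hbound
    filter_upwards [hfx] with i hi
    refine (residual_rpow_le_of_tikhonov_le (hα i) (h i)).trans ?_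
    have := (hα i).le
    gcongr
  exact tendsto_zero_iff_norm_tendsto_zero.2
    (tendsto_zero_of_tendsto_rpow_zero hp (fun _ => norm_nonneg _) hrpow)

end Comparison

variable {X Y : Type*} [NormedAddCommGroup X] [NormedSpace ℝ X]
  [NormedAddCommGroup Y] [NormedSpace ℝ Y]
  {D : Set X} {F : X → Y} {f : X → ℝ} {p : ℝ} {y : Y} {yk : ℕ → Y} {α : ℕ → ℝ} {x z : ℕ → X}

theorem exists_subseq_weakTendsto_isMinimizingSolution {c : ℝ} (hp : 0 < p)
    (hcoer : ∀ C : ℝ, Bornology.IsBounded {x ∈ D | f x ≤ C})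
    (hf : WeakSeqLowerSemicontinuousOn f D) (hF : WeakSeqContinuousOn F D)
    (hD : BoundedlyWeakSeqCompact D) (hc : ∀ v ∈ D, F v = y → c ≤ f v)
    (hyk : Tendsto yk atTop (𝓝 y)) (hfz : Tendsto (fun k => f (z k)) atTop (𝓝 c))
    (hα : ∀ k, 0 < α k) (hα0 : Tendsto α atTop (𝓝 0))
    (hmisfit : Tendsto (fun k => ‖F (z k) - yk k‖ ^ p / α k) atTop (𝓝 0))
    (hxD : ∀ k, x k ∈ D)
    (hx : ∀ k, tikhonov F f p (α k) (yk k) (x k) ≤ tikhonov F f p (α k) (yk k) (z k)) :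
    ∃ φ : ℕ → ℕ, StrictMono φ ∧ ∃ xt, IsMinimizingSolution F f D y xt ∧
      WeakTendsto (fun l => x (φ l)) xt ∧ Tendsto (fun l => f (x (φ l))) atTop (𝓝 (f xt)) := by
  have hub (k) : f (x k) ≤ ‖F (z k) - yk k‖ ^ p / α k + f (z k) :=
    penalty_le_of_tikhonov_le (hα k) (hx k)
  have hb : Tendsto (fun k => ‖F (z k) - yk k‖ ^ p / α k + f (z k)) atTop (𝓝 c) := by
    simpa only [zero_add] using hmisfit.add hfz
  obtain ⟨C, hC⟩ := hb.bddAbove_range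
  have hbounded : Bornology.IsBounded (Set.range x) := (hcoer C).subset <|
    Set.range_subset_iff.2 fun k => ⟨hxD k, (hub k).trans (hC ⟨k, rfl⟩)⟩
  obtain ⟨φ, xt, hφ, hxtD, hweak⟩ := hD x hxD hbounded
  have hφtop := hφ.tendsto_atTop
  have hlower : ∀ a < f xt, ∀ᶠ l in atTop, a < f (x (φ l)) :=
    hf _ xt (fun l => hxD (φ l)) hxtD hweak
  have hresidual : Tendsto (fun l => F (x (φ l)) - yk (φ l)) atTop (𝓝 0) :=
    tendsto_residual_of_tikhonov_le hp (fun l => hα (φ l)) (hα0.comp hφtop)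
      (hmisfit.comp hφtop) (hfz.comp hφtop)
      ((hlower (f xt - 1) (sub_one_lt _)).mono fun _ => le_of_lt) fun l => hx (φ l)
  have hstrong : Tendsto (fun l => F (x (φ l))) atTop (𝓝 y) := by
    simpa only [Function.comp_apply, sub_add_cancel, zero_add] using
      hresidual.add (hyk.comp hφtop)
  have hFxt : F xt = y :=
    (hF _ xt (fun l => hxD (φ l)) hxtD hweak).unique (.of_tendsto hstrong)
  have hubφ : ∀ᶠ l in atTop, f (x (φ l)) ≤ ‖F (z (φ l)) - yk (φ l)‖ ^ p / α (φ l) + f (z (φ l)) :=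
    hφtop.eventually (.of_forall hub)
  have hle : f xt ≤ c := le_of_eventually_gt_of_le_tendsto hlower hubφ (hb.comp hφtop)
  exact ⟨φ, hφ, xt, ⟨hxtD, hFxt, fun v hv hFv => hle.trans (hc v hv hFv)⟩, hweak,
    tendsto_of_eventually_gt_of_le_tendsto hlower hubφ (hb.comp hφtop) (hc xt hxtD hFxt)⟩

theorem stmt_3_general {xdag : X} {δ γ : ℕ → ℝ} (hp : 0 < p)
    (hcoer : ∀ C : ℝ, Bornology.IsBounded {x ∈ D | f x ≤ C})
    (hf : WeakSeqLowerSemicontinuousOn f D) (hF : WeakSeqContinuousOn F D)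
    (hD : BoundedlyWeakSeqCompact D) (hxdag : IsMinimizingSolution F f D y xdag)
    (hyk : ∀ k, ‖y - yk k‖ ≤ δ k) (hfz : Tendsto (fun k => f (z k)) atTop (𝓝 (f xdag)))
    (hγ : ∀ k, ‖F xdag - F (z k)‖ ≤ γ k)
    (hα : ∀ k, 0 < α k) (hα0 : Tendsto α atTop (𝓝 0))
    (hratio : Tendsto (fun k => (δ k + γ k) ^ p / α k) atTop (𝓝 0))
    (hxD : ∀ k, x k ∈ D)
    (hx : ∀ k, tikhonov F f p (α k) (yk k) (x k) ≤ tikhonov F f p (α k) (yk k) (z k)) :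
    ∃ φ : ℕ → ℕ, StrictMono φ ∧ ∃ xt, IsMinimizingSolution F f D y xt ∧
      WeakTendsto (fun l => x (φ l)) xt ∧ Tendsto (fun l => f (x (φ l))) atTop (𝓝 (f xt)) := by
  have hδ_nonneg (k) : 0 ≤ δ k := (norm_nonneg _).trans (hyk k)
  have hγ_nonneg (k) : 0 ≤ γ k := (norm_nonneg _).trans (hγ k)
  have hrpow : Tendsto (fun k => (δ k + γ k) ^ p) atTop (𝓝 0) := by
    simpa only [mul_div_cancel₀ _ (hα _).ne', mul_zero] using hα0.mul hratio
  have hnoise : Tendsto (fun k => δ k + γ k) atTop (𝓝 0) :=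
    tendsto_zero_of_tendsto_rpow_zero hp (fun k => add_nonneg (hδ_nonneg k) (hγ_nonneg k)) hrpow
  have hdata : Tendsto yk atTop (𝓝 y) := tendsto_iff_norm_sub_tendsto_zero.2 <|
    squeeze_zero (fun _ => norm_nonneg _)
      (fun k => (norm_sub_rev _ _).trans_le <|
        (hyk k).trans (le_add_of_nonneg_right (hγ_nonneg k))) hnoise
  have hmisfit_le (k) : ‖F (z k) - yk k‖ ≤ δ k + γ k := calc
    ‖F (z k) - yk k‖ ≤ ‖F (z k) - y‖ + ‖y - yk k‖ := norm_sub_le_norm_sub_add_norm_sub ..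
    _ = ‖y - yk k‖ + ‖F xdag - F (z k)‖ := by rw [hxdag.map_eq, norm_sub_rev y (F (z k)), add_comm]
    _ ≤ δ k + γ k := add_le_add (hyk k) (hγ k)
  have hmisfit : Tendsto (fun k => ‖F (z k) - yk k‖ ^ p / α k) atTop (𝓝 0) := by
    refine squeeze_zero (fun k => ?_) (fun k => ?_) hratio <;> have := (hα k).le
    · positivity
    · gcongr
      exact hmisfit_le k
  exact exists_subseq_weakTendsto_isMinimizingSolution hp hcoer hf hF hD hxdag.le_of_map_eq
    hdata hfz hα hα0 hmisfit hxD hx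

end Tikhonov

/-- Convergence of discretized Tikhonov minimizers to an `f`-minimizing solution
under the a priori parameter choice `α_k → 0`, `(δ_k + γ_k)^p / α_k → 0`. -/
theorem stmt_3 {X Y : Type*} [NormedAddCommGroup X] [NormedSpace ℝ X]
    [NormedAddCommGroup Y] [NormedSpace ℝ Y]
    (D : Set X) (hDconv : Convex ℝ D)
    (F : X → Y) (f : X → ℝ) (p : ℝ) (hp : 1 ≤ p)
    (hf0 : ∀ x, 0 ≤ f x)
    (hfcoer : ∀ C : ℝ, Bornology.IsBounded {x : X | f x ≤ C})
    (hfwlsc : ∀ (u : ℕ → X) (x : X), WeakTendsto u x →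
      f x ≤ Filter.liminf (fun k => f (u k)) atTop)
    (hFwc : ∀ (u : ℕ → X) (x : X), (∀ k, u k ∈ D) → x ∈ D → WeakTendsto u x →
      WeakTendsto (fun k => F (u k)) (F x))
    (hcpt : ∀ (u : ℕ → X), (∀ k, u k ∈ D) → Bornology.IsBounded (Set.range u) →
      ∃ (φ : ℕ → ℕ) (x : X), StrictMono φ ∧ x ∈ D ∧ WeakTendsto (fun l => u (φ l)) x)
    (y : Y) (xdag : X) (hxdagD : xdag ∈ D) (hxdagsol : F xdag = y)
    (hxdagmin : ∀ v ∈ D, F v = y → f xdag ≤ f v)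
    (δ : ℕ → ℝ) (hδpos : ∀ k, 0 < δ k) (hδ0 : Tendsto δ atTop (𝓝 0))
    (yk : ℕ → Y) (hyk : ∀ k, ‖y - yk k‖ ≤ δ k)
    (Dk : ℕ → Set X) (hDk : ∀ k, Dk k ⊆ D)
    (z : ℕ → X) (hz : ∀ k, z k ∈ Dk k)
    (hfz : Tendsto (fun k => f (z k)) atTop (𝓝 (f xdag)))
    (γ : ℕ → ℝ) (hγ : ∀ k, γ k = ‖F xdag - F (z k)‖)
    (hγ0 : Tendsto γ atTop (𝓝 0))
    (α : ℕ → ℝ) (hαpos : ∀ k, 0 < α k) (hα0 : Tendsto α atTop (𝓝 0))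
    (hratio : Tendsto (fun k => (δ k + γ k) ^ p / α k) atTop (𝓝 0))
    (x : ℕ → X)
    (hx : ∀ k, x k ∈ Dk k ∧ ∀ v ∈ Dk k,
      ‖F (x k) - yk k‖ ^ p + α k * f (x k) ≤ ‖F v - yk k‖ ^ p + α k * f v) :
    ∃ (φ : ℕ → ℕ), StrictMono φ ∧ ∃ xt ∈ D,
      WeakTendsto (fun l => x (φ l)) xt ∧ F xt = y ∧
      (∀ v ∈ D, F v = y → f xt ≤ f v) ∧
      Tendsto (fun l => f (x (φ l))) atTop (𝓝 (f xt)) := by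
  have hlsc : WeakSeqLowerSemicontinuousOn f D := weakSeqLowerSemicontinuousOn_of_le_liminf
    ⟨0, Set.forall_mem_image.2 fun v _ => hf0 v⟩ fun u v _ _ => hfwlsc u v
  obtain ⟨φ, hφ, xt, ⟨hmem, hsol, hmin⟩, hweak, hlim⟩ := stmt_3_general (by linarith)
    (fun C => (hfcoer C).subset fun _ hv => hv.2) hlsc hFwc hcpt ⟨hxdagD, hxdagsol, hxdagmin⟩
    hyk hfz (fun k => (hγ k).ge) hαpos hα0 hratio (fun k => hDk k (hx k).1)
    fun k => (hx k).2 (z k) (hz k)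
  exact ⟨φ, hφ, xt, hmem, hweak, hsol, hmin, hlim⟩
end

section
/- Let X and Y be real normed spaces, D_m ⊆ X, F : X → Y, y ∈ Y, y^δ ∈ Y with ‖y − y^δ‖ ≤ δ for some δ > 0, p ∈ [1, ∞), α > 0, 1 < τ < λ, ε ∈ (0, τ − 1), and let f : X → ℝ be convex. Let x† satisfy F(x†) = y, suppose F is Fréchet differentiable at x† with derivative F′(x†) : X → Y (a continuous linear map), and suppose there is a continuous linear functional ω : Y → ℝ such that ξ := ω ∘ F′(x†) is a subgradient of f at x† (source condition). Assume there are constants C > 0 and η > 0 with ‖F′(x†)(u − x†)‖ ≤ C ‖F(u) − F(x†)‖ for all u in the ball B(x†, η), and a constant c > 0 such that |f(u) − f(v)| ≤ c ‖u − v‖ for all u, v ∈ B(x†, η). Let x ∈ D_m minimize T_α(v) = ‖F(v) − y^δ‖^p + α f(v) over D_m with τδ ≤ ‖F(x) − y^δ‖ ≤ λδ, and let x̄ ∈ D_m ∩ B(x†, η) with ‖F(x̄) − y^δ‖ < (τ − ε)δ, and assume x ∈ B(x†, η). Then ‖F(x) − y^δ‖ ≤ λδ and D_ξ(x, x†) ≤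 c ‖x̄ − x†‖ + C ‖ω‖ (2τ + λ + 2) δ, where D_ξ(u, x†) := f(u) − f(x†) − ξ(u − x†) and ‖ω‖ is the operator norm of ω. -/
/-!
Comparing `x` with a competitor of no larger residual gives `f x ≤ f xbar`, so `f x - f xdag` is
controlled by the local Lipschitz bound at `xbar`. The linear part of the Bregman distance factors
through `F'`, so the tangential cone condition turns it into a multiple of `‖F x - F xdag‖`, which
the discrepancy principle and the noise level bound by `(lam + 1) * δ`.
-/

/-- The Bregman distance `D_ξ(u, v)` of `f` at the base point `v` in the direction of `ξ`. The
functional `ξ` is arbitrary, not only a subgradient of `f` at `v`, so the value may be negative. -/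
def bregmanDist {X : Type*} [AddCommGroup X] [Module ℝ X] [TopologicalSpace X]
    (f : X → ℝ) (ξ : X →L[ℝ] ℝ) (u v : X) : ℝ :=
  f u - f v - ξ (u - v)

/-- The Tikhonov functional `T_α` for the equation `F v = yδ`, with residual exponent `p`,
regularization parameter `α` and penalty `f`. -/
noncomputable def tikhonovFunctional {X Y : Type*} [SeminormedAddCommGroup Y]
    (F : X → Y) (yδ : Y) (p α : ℝ) (f : X → ℝ) (v : X) : ℝ :=
  ‖F v - yδ‖ ^ p + α * f v

theorem le_of_isMinOn_add_mul {X R : Type*} [Semiring R] [LinearOrder R] [IsStrictOrderedRing R]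
    {g f : X → R} {α : R} {s : Set X} {x v : X} (hα : 0 < α)
    (hmin : IsMinOn (fun u ↦ g u + α * f u) s x) (hv : v ∈ s) (hg : g v ≤ g x) :
    f x ≤ f v := by
  have hle : g x + α * f x ≤ g x + α * f v :=
    (isMinOn_iff.mp hmin v hv).trans (by gcongr)
  exact le_of_mul_le_mul_left (le_of_add_le_add_left hle) hα

theorem le_of_isMinOn_tikhonovFunctional {X Y : Type*} [SeminormedAddCommGroup Y]
    {F : X → Y} {yδ : Y} {p α : ℝ} {f : X → ℝ} {s : Set X} {x v : X} (hp : 0 ≤ p) (hα : 0 < α)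
    (hmin : IsMinOn (tikhonovFunctional F yδ p α f) s x) (hv : v ∈ s)
    (hres : ‖F v - yδ‖ ≤ ‖F x - yδ‖) :
    f x ≤ f v :=
  le_of_isMinOn_add_mul (g := fun u ↦ ‖F u - yδ‖ ^ p) hα hmin hv
    (Real.rpow_le_rpow (norm_nonneg _) hres hp)

section BregmanDist

variable {X Y : Type*} [AddCommGroup X] [Module ℝ X] [TopologicalSpace X]
  [SeminormedAddCommGroup Y] [NormedSpace ℝ Y]

theorem bregmanDist_comp_le (f : X → ℝ) (ω : Y →L[ℝ] ℝ) (A : X →L[ℝ] Y) (u v : X) :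
    bregmanDist f (ω.comp A) u v ≤ f u - f v + ‖ω‖ * ‖A (u - v)‖ := by
  have hneg : -ω (A (u - v)) ≤ ‖ω‖ * ‖A (u - v)‖ :=
    (neg_le_abs _).trans (ω.le_opNorm _)
  simpa only [bregmanDist, ContinuousLinearMap.comp_apply, sub_eq_add_neg (f u - f v)]
    using add_le_add_right hneg (f u - f v)

theorem bregmanDist_comp_le_of_residual_le {F : X → Y} {f : X → ℝ} {ω : Y →L[ℝ] ℝ}
    {A : X →L[ℝ] Y} {z : Y} {u v : X} {C r s : ℝ} (hC : 0 ≤ C)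
    (hcone : ‖A (u - v)‖ ≤ C * ‖F u - F v‖) (hu : ‖F u - z‖ ≤ r) (hv : ‖F v - z‖ ≤ s) :
    bregmanDist f (ω.comp A) u v ≤ f u - f v + C * ‖ω‖ * (r + s) := by
  have himage : ‖F u - F v‖ ≤ r + s := by
    rw [norm_sub_rev] at hv
    exact (norm_sub_le_norm_sub_add_norm_sub _ z _).trans (add_le_add hu hv)
  calc
    bregmanDist f (ω.comp A) u v ≤ f u - f v + ‖ω‖ * ‖A (u - v)‖ := bregmanDist_comp_le f ω A u v
    _ ≤ f u - f v + ‖ω‖ * (C * (r + s)) := by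
      gcongr
      exact hcone.trans (by gcongr)
    _ = f u - f v + C * ‖ω‖ * (r + s) := by ring

end BregmanDist

theorem stmt_17_general {X Y : Type*} [SeminormedAddCommGroup X] [NormedSpace ℝ X]
    [SeminormedAddCommGroup Y] [NormedSpace ℝ Y]
    {Dm : Set X} {F : X → Y} {y yδ : Y} {δ : ℝ} (hnoise : ‖y - yδ‖ ≤ δ)
    {p α : ℝ} (hp : 0 ≤ p) (hα : 0 < α) {f : X → ℝ} {xdag : X} (hsol : F xdag = y)
    {F' : X →L[ℝ] Y} (_hF' : HasFDerivAt F F' xdag) (ω : Y →L[ℝ] ℝ)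
    {C η : ℝ} (hC : 0 ≤ C)
    (hcone : ∀ u ∈ Metric.ball xdag η, ‖F' (u - xdag)‖ ≤ C * ‖F u - F xdag‖)
    {c : ℝ} (hlip : ∀ u ∈ Metric.ball xdag η, f u - f xdag ≤ c * ‖u - xdag‖)
    {x : X} (hmin : IsMinOn (tikhonovFunctional F yδ p α f) Dm x)
    {lam : ℝ} (hdisc : ‖F x - yδ‖ ≤ lam * δ) (hx : x ∈ Metric.ball xdag η)
    {xbar : X} (hxbarDm : xbar ∈ Dm) (hxbar : xbar ∈ Metric.ball xdag η)
    (hres : ‖F xbar - yδ‖ ≤ ‖F x - yδ‖) :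
    bregmanDist f (ω.comp F') x xdag ≤ c * ‖xbar - xdag‖ + C * ‖ω‖ * (lam + 1) * δ := by
  have hpenalty : f x ≤ f xbar := le_of_isMinOn_tikhonovFunctional hp hα hmin hxbarDm hres
  calc
    bregmanDist f (ω.comp F') x xdag ≤ f x - f xdag + C * ‖ω‖ * (lam * δ + δ) :=
      bregmanDist_comp_le_of_residual_le hC (hcone x hx) hdisc (hsol ▸ hnoise)
    _ ≤ f xbar - f xdag + C * ‖ω‖ * (lam * δ + δ) := by gcongr
    _ ≤ c * ‖xbar - xdag‖ + C * ‖ω‖ * (lam * δ + δ) := by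
      gcongr
      exact hlip xbar hxbar
    _ = c * ‖xbar - xdag‖ + C * ‖ω‖ * (lam + 1) * δ := by ring

/-- Convergence rates under the classical source condition
`ξ = ω ∘ F'(x†) ∈ ∂f(x†)` and a local tangential-cone-type estimate. -/
theorem stmt_17 {X Y : Type*} [NormedAddCommGroup X] [NormedSpace ℝ X]
    [NormedAddCommGroup Y] [NormedSpace ℝ Y]
    (Dm : Set X) (F : X → Y) (y yδ : Y) (δ : ℝ) (hδ : 0 < δ)
    (hnoise : ‖y - yδ‖ ≤ δ)
    (p : ℝ) (hp : 1 ≤ p) (α : ℝ) (hα : 0 < α)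
    (τ lam ε : ℝ) (hτ : 1 < τ) (hτlam : τ < lam) (hε : ε ∈ Set.Ioo 0 (τ - 1))
    (f : X → ℝ) (hfconv : ConvexOn ℝ Set.univ f)
    (xdag : X) (hxdagsol : F xdag = y)
    (F' : X →L[ℝ] Y) (hF' : HasFDerivAt F F' xdag)
    (ω : Y →L[ℝ] ℝ)
    (hξ : ∀ u : X, f xdag + (ω.comp F') (u - xdag) ≤ f u)
    (C η : ℝ) (hC : 0 < C) (hη : 0 < η)
    (htc : ∀ u ∈ Metric.ball xdag η, ‖F' (u - xdag)‖ ≤ C * ‖F u - F xdag‖)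
    (c : ℝ) (hc : 0 < c)
    (hlip : ∀ u ∈ Metric.ball xdag η, ∀ v ∈ Metric.ball xdag η,
      |f u - f v| ≤ c * ‖u - v‖)
    (x : X) (hxmem : x ∈ Dm)
    (hxmin : ∀ v ∈ Dm, ‖F x - yδ‖ ^ p + α * f x ≤ ‖F v - yδ‖ ^ p + α * f v)
    (hxdisc : τ * δ ≤ ‖F x - yδ‖ ∧ ‖F x - yδ‖ ≤ lam * δ)
    (hxball : x ∈ Metric.ball xdag η)
    (xbar : X) (hxbarmem : xbar ∈ Dm) (hxbarball : xbar ∈ Metric.ball xdag η)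
    (hxbardisc : ‖F xbar - yδ‖ < (τ - ε) * δ) :
    ‖F x - yδ‖ ≤ lam * δ ∧
    f x - f xdag - (ω.comp F') (x - xdag) ≤
      c * ‖xbar - xdag‖ + C * ‖ω‖ * (2 * τ + lam + 2) * δ := by
  have hres : ‖F xbar - yδ‖ ≤ ‖F x - yδ‖ :=
    hxbardisc.le.trans (le_trans (by gcongr; linarith [hε.1]) hxdisc.1)
  refine ⟨hxdisc.2, (stmt_17_general hnoise (zero_le_one.trans hp) hα hxdagsol hF' ω hC.le htc
    (fun u hu ↦ (le_abs_self _).trans (hlip u hu xdag (Metric.mem_ball_self hη)))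
    hxmin hxdisc.2 hxball hxbarmem hxbarball hres).trans ?_⟩
  gcongr ?_ + _ * ?_ * _ <;> linarith
end
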